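/- (Proposition 5) Let each f_i : ℝ → ℝ (i = 1,…,n) be twice continuously differentiable with f_i''(x) ≥ m > 0 for all x ∈ [p̲_i, p̄_i]. Let {P[k]}_{k≥0} be n×n column-stochastic matrices with P_{ij}[k] = 1/D_j⁺[k] if j transmits to i at time k or j = i (where D_j⁺[k] ≤ n is node j's instantaneous out-degree including itself) and P_{ij}[k] = 0 otherwise, and suppose there exists a positive integer B such that the union of the communication digraphs over each window {kB, …, (k+1)B − 1} is strongly connected. Consider the iterates p_i[k+1] = Proj_{[p̲_i,p̄_i]}(p_i[k] − s f_i'(p_i[k]) + sξx_i[k]), λ[k+1] = P[k](λ[k] − s·y[k]), v[k+1] = P[k]v[k] with v[0] = 𝟙, x[k+1] = diag(v[k+1])^{−1}λ[k+1], y[k+1] = P[k]y[k] + n̂(p[k+1] − p[k]) with y[0] = n̂(p[0] − ℓ), and set e[k] := x[k] − (1/n)(𝟙ᵀλ[k])𝟙 and z[k] := (p[k] − p*, (1/n̂)𝟙ᵀλ[k] − λ*), where (p*, λ*) is the equilibrium of the nominal system. Then there exist a ∈ (0,1), s̄ > 0, α2 > 0 and β2 ≥ 0 (β2 depending on initial conditions)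 such that for every s ∈ (0, s̄) and every K ≥ 0: ‖e‖₂^{a,K} ≤ s·α2·‖z‖₂^{a,K} + β2. -/

import Mathlib

open Matrix

/-- Projection of `x` onto the interval `[lo, hi]`. -/
noncomputable def projI (lo hi x : ℝ) : ℝ := max lo (min hi x)

/-- Euclidean norm of a vector in ℝ^d. -/
noncomputable def eunorm {d : ℕ} (x : Fin d → ℝ) : ℝ := Real.sqrt (∑ i, (x i) ^ 2)

/-- The weighted norm ‖x‖₂^{a,K} = max_{0 ≤ k ≤ K} a^{-k} ‖x[k]‖₂. -/
noncomputable def wnormSeq {d : ℕ} (a : ℝ) (x : ℕ → Fin d → ℝ) (K : ℕ) : ℝ :=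
  (Finset.range (K + 1)).sup' (Finset.nonempty_range_iff.mpr (Nat.succ_ne_zero K))
    fun k => eunorm (x k) / a ^ k


/-- Spread (oscillation) of a vector. -/
noncomputable def spv {n : ℕ} (u : Fin n → ℝ) : ℝ := ⨆ ij : Fin n × Fin n, (u ij.1 - u ij.2)

lemma le_spv {n : ℕ} (u : Fin n → ℝ) (i j : Fin n) : u i - u j ≤ spv u :=
  le_ciSup (f := fun ij : Fin n × Fin n => u ij.1 - u ij.2) (Set.finite_range _).bddAbove (i, j)

lemma spv_le {n : ℕ} (hn : 0 < n) {u : Fin n → ℝ} {c : ℝ} (h : ∀ i j, u i - u j ≤ c) :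
    spv u ≤ c := by
  have : Nonempty (Fin n) := ⟨⟨0, hn⟩⟩
  exact ciSup_le fun ij => h ij.1 ij.2

lemma spv_nonneg {n : ℕ} (hn : 0 < n) (u : Fin n → ℝ) : 0 ≤ spv u := by
  have := le_spv u ⟨0, hn⟩ ⟨0, hn⟩
  simpa using this

lemma spv_add {n : ℕ} (hn : 0 < n) (u w : Fin n → ℝ) : spv (u + w) ≤ spv u + spv w := by
  apply spv_le hn
  intro i j
  have h1 := le_spv u i j
  have h2 := le_spv w i j
  simp only [Pi.add_apply]
  linarith

lemma exists_min_max {n : ℕ} (hn : 0 < n) (u : Fin n → ℝ) :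
    ∃ a b, (∀ i, u a ≤ u i) ∧ (∀ i, u i ≤ u b) := by
  have : Nonempty (Fin n) := ⟨⟨0, hn⟩⟩
  obtain ⟨a, ha⟩ := Finite.exists_min u
  obtain ⟨b, hb⟩ := Finite.exists_max u
  exact ⟨a, b, ha, hb⟩

/-- Row-stochastic averaging bounds. -/
lemma row_ge {n : ℕ} {Q : Matrix (Fin n) (Fin n) ℝ} (h0 : ∀ i j, 0 ≤ Q i j)
    (h1 : ∀ i, ∑ j, Q i j = 1) (u : Fin n → ℝ) (c : ℝ) (hu : ∀ i, c ≤ u i) (i : Fin n) :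
    c ≤ (Q *ᵥ u) i := by
  have : c = ∑ j, Q i j * c := by rw [← Finset.sum_mul, h1, one_mul]
  rw [this]
  exact Finset.sum_le_sum fun j _ => mul_le_mul_of_nonneg_left (hu j) (h0 i j)

lemma row_le {n : ℕ} {Q : Matrix (Fin n) (Fin n) ℝ} (h0 : ∀ i j, 0 ≤ Q i j)
    (h1 : ∀ i, ∑ j, Q i j = 1) (u : Fin n → ℝ) (c : ℝ) (hu : ∀ i, u i ≤ c) (i : Fin n) :
    (Q *ᵥ u) i ≤ c := by
  have : c = ∑ j, Q i j * c := by rw [← Finset.sum_mul, h1, one_mul]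
  rw [this]
  show ∑ j, Q i j * u j ≤ _
  exact Finset.sum_le_sum fun j _ => mul_le_mul_of_nonneg_left (hu j) (h0 i j)

lemma spv_mulVec {n : ℕ} (hn : 0 < n) {Q : Matrix (Fin n) (Fin n) ℝ} (h0 : ∀ i j, 0 ≤ Q i j)
    (h1 : ∀ i, ∑ j, Q i j = 1) (u : Fin n → ℝ) : spv (Q *ᵥ u) ≤ spv u := by
  obtain ⟨a, b, ha, hb⟩ := exists_min_max hn u
  apply spv_le hn
  intro i j
  have e1 := row_le h0 h1 u _ hb i
  have e2 := row_ge h0 h1 u _ ha j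
  have := le_spv u b a
  linarith

/-- Positivity spreads through the network in `n` windows. -/
lemma spread {n : ℕ} (T : ℕ → Fin n → Fin n → Prop) (B : ℕ)
    (hconn : ∀ k : ℕ, ∀ i j : Fin n,
      Relation.ReflTransGen (fun u w => ∃ l, k * B ≤ l ∧ l < (k + 1) * B ∧ T l u w) i j)
    (q : ℝ) (hq0 : 0 < q) (k : ℕ) (w : ℕ → Fin n → ℝ)
    (hw : ∀ r i j, (T (k * B + r) j i ∨ j = i) → q * w r j ≤ w (r + 1) i)
    (i j : Fin n) : q ^ (n * B) * w 0 j ≤ w (n * B) i := by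
  classical
  have hpow : ∀ r s i, q ^ s * w r i ≤ w (r + s) i := by
    intro r s i
    induction s with
    | zero => simp
    | succ s ih =>
      have := hw (r + s) i i (Or.inr rfl)
      calc q ^ (s + 1) * w r i = q * (q ^ s * w r i) := by ring
        _ ≤ q * w (r + s) i := mul_le_mul_of_nonneg_left ih hq0.le
        _ ≤ _ := this
  let S : ℕ → Finset (Fin n) := fun r => Finset.univ.filter fun i => q ^ (r * B) * w 0 j ≤ w (r * B) i
  have hmem : ∀ r i, i ∈ S r ↔ q ^ (r * B) * w 0 j ≤ w (r * B) i := by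
    intro r i; simp [S]
  have hstep : ∀ r s i, i ∈ S r → q ^ (r * B + s) * w 0 j ≤ w (r * B + s) i := by
    intro r s i hi
    rw [hmem] at hi
    calc q ^ (r * B + s) * w 0 j = q ^ s * (q ^ (r * B) * w 0 j) := by rw [pow_add]; ring
      _ ≤ q ^ s * w (r * B) i := mul_le_mul_of_nonneg_left hi (by positivity)
      _ ≤ _ := hpow _ _ _
  have hsub : ∀ r, S r ⊆ S (r + 1) := by
    intro r i hi
    have := hstep r B i hi
    rw [hmem, Nat.succ_mul]
    exact this
  have hj : ∀ r, j ∈ S r := by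
    intro r
    induction r with
    | zero => rw [hmem]; simp
    | succ r ih => exact hsub r ih
  have hgrow : ∀ r, S r ≠ Finset.univ → S r ⊂ S (r + 1) := by
    intro r hne
    refine (Finset.ssubset_iff_of_subset (hsub r)).2 ?_
    by_contra hcon
    push Not at hcon
    apply hne
    apply Finset.eq_univ_of_forall
    intro i
    have hpath := hconn (k + r) j i
    induction hpath with
    | refl => exact hj r
    | tail _ hl ih =>
      rename_i b c _
      obtain ⟨l, hl1, hl2, hT⟩ := hl
      apply hcon
      obtain ⟨s, rfl⟩ := Nat.exists_eq_add_of_le hl1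
      have hs : s < B := by
        have e : (k + r + 1) * B = (k + r) * B + B := by ring
        omega
      have h1 := hstep r s b ih
      have h2 := hw (r * B + s) c b (Or.inl (by
        have e : k * B + (r * B + s) = (k + r) * B + s := by ring
        rw [e]; exact hT))
      have h3 := hpow (r * B + s + 1) (B - s - 1) c
      rw [hmem]
      have e1 : (r + 1) * B = r * B + s + 1 + (B - s - 1) := by
        have : (r + 1) * B = r * B + B := by ring
        omega
      rw [e1]
      calc q ^ (r * B + s + 1 + (B - s - 1)) * w 0 j
          = q ^ (B - s - 1) * (q * (q ^ (r * B + s) * w 0 j)) := by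
            rw [pow_add, pow_succ]; ring
        _ ≤ q ^ (B - s - 1) * (q * w (r * B + s) b) := by gcongr
        _ ≤ q ^ (B - s - 1) * w (r * B + s + 1) c := by gcongr
        _ ≤ _ := h3
  have hcard : ∀ r, min n r ≤ (S r).card := by
    intro r
    induction r with
    | zero => simp
    | succ r ih =>
      by_cases h : S r = Finset.univ
      · have h2 : S (r + 1) = Finset.univ :=
          Finset.univ_subset_iff.1 (h ▸ hsub r)
        rw [h2]; simp
      · have := Finset.card_lt_card (hgrow r h)
        omega
  have hfin : S n = Finset.univ := by
    rw [← Finset.card_eq_iff_eq_univ]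
    have h1 := hcard n
    have h2 := Finset.card_le_univ (S n)
    simp at h1 h2 ⊢
    omega
  have : i ∈ S n := by rw [hfin]; simp
  exact (hmem n i).1 this

/-- Homogeneous trajectory. -/
noncomputable def homTraj {n : ℕ} (Q : ℕ → Matrix (Fin n) (Fin n) ℝ) (t : ℕ) (u : Fin n → ℝ) :
    ℕ → Fin n → ℝ
  | 0 => u
  | r + 1 => Q (t + r) *ᵥ homTraj Q t u r

lemma hom_contract {n : ℕ} (hn : 0 < n) (T : ℕ → Fin n → Fin n → Prop) (B : ℕ)
    (hconn : ∀ k : ℕ, ∀ i j : Fin n,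
      Relation.ReflTransGen (fun u w => ∃ l, k * B ≤ l ∧ l < (k + 1) * B ∧ T l u w) i j)
    (q : ℝ) (hq0 : 0 < q) (Q : ℕ → Matrix (Fin n) (Fin n) ℝ)
    (h0 : ∀ k i j, 0 ≤ Q k i j) (h1 : ∀ k i, ∑ j, Q k i j = 1)
    (hQ : ∀ k i j, (T k j i ∨ j = i) → q ≤ Q k i j) (k : ℕ) (u : Fin n → ℝ) :
    spv (homTraj Q (k * B) u (n * B)) ≤ (1 - q ^ (n * B)) * spv u := by
  obtain ⟨a, b, ha, hb⟩ := exists_min_max hn u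
  have hlo : ∀ r i, u a ≤ homTraj Q (k * B) u r i := by
    intro r
    induction r with
    | zero => exact ha
    | succ r ih => exact row_ge (h0 _) (h1 _) _ _ ih
  have hhi : ∀ r i, homTraj Q (k * B) u r i ≤ u b := by
    intro r
    induction r with
    | zero => exact hb
    | succ r ih => exact row_le (h0 _) (h1 _) _ _ ih
  have key := fun i => spread T B hconn q hq0 k (fun r i => homTraj Q (k * B) u r i - u a)
    (by
      intro r i j hT
      have e : homTraj Q (k * B) u (r + 1) i - u a
          = ∑ l, Q (k * B + r) i l * (homTraj Q (k * B) u r l - u a) := by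
        simp only [mul_sub, Finset.sum_sub_distrib, ← Finset.sum_mul, h1, one_mul]
        rfl
      rw [e]
      calc q * (homTraj Q (k * B) u r j - u a)
          ≤ Q (k * B + r) i j * (homTraj Q (k * B) u r j - u a) :=
            mul_le_mul_of_nonneg_right (hQ _ _ _ hT) (sub_nonneg.2 (hlo r j))
        _ ≤ _ := Finset.single_le_sum
            (f := fun l => Q (k * B + r) i l * (homTraj Q (k * B) u r l - u a))
            (fun l _ => mul_nonneg (h0 _ _ _) (sub_nonneg.2 (hlo r l))) (Finset.mem_univ j))
    i b
  have hsp : spv u = u b - u a := by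
    apply le_antisymm
    · apply spv_le hn
      intro i j
      linarith [ha j, hb i]
    · exact le_spv u b a
  rw [hsp]
  apply spv_le hn
  intro i j
  have := key j
  have h2 := hhi (n * B) i
  simp only [homTraj] at this
  nlinarith

lemma pert_contract {n : ℕ} (hn : 0 < n) (T : ℕ → Fin n → Fin n → Prop) (B : ℕ)
    (hconn : ∀ k : ℕ, ∀ i j : Fin n,
      Relation.ReflTransGen (fun u w => ∃ l, k * B ≤ l ∧ l < (k + 1) * B ∧ T l u w) i j)
    (q : ℝ) (hq0 : 0 < q) (Q : ℕ → Matrix (Fin n) (Fin n) ℝ)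
    (h0 : ∀ k i j, 0 ≤ Q k i j) (h1 : ∀ k i, ∑ j, Q k i j = 1)
    (hQ : ∀ k i j, (T k j i ∨ j = i) → q ≤ Q k i j)
    (u d : ℕ → Fin n → ℝ) (hu : ∀ k, u (k + 1) = Q k *ᵥ u k + d k) (k : ℕ) :
    spv (u (k * B + n * B)) ≤ (1 - q ^ (n * B)) * spv (u (k * B))
      + ∑ r ∈ Finset.range (n * B), spv (d (k * B + r)) := by
  have herr : ∀ r, spv (u (k * B + r) - homTraj Q (k * B) (u (k * B)) r)
      ≤ ∑ r ∈ Finset.range r, spv (d (k * B + r)) := by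
    intro r
    induction r with
    | zero => simp [homTraj, spv]
    | succ r ih =>
      rw [Finset.sum_range_succ]
      have e : u (k * B + (r + 1)) - homTraj Q (k * B) (u (k * B)) (r + 1)
          = Q (k * B + r) *ᵥ (u (k * B + r) - homTraj Q (k * B) (u (k * B)) r)
            + d (k * B + r) := by
        rw [← add_assoc, hu, Matrix.mulVec_sub, homTraj]
        abel
      rw [e]
      refine (spv_add hn _ _).trans ?_
      have := spv_mulVec hn (h0 (k * B + r)) (h1 _)
        (u (k * B + r) - homTraj Q (k * B) (u (k * B)) r)
      linarith
  have e : u (k * B + n * B) = homTraj Q (k * B) (u (k * B)) (n * B)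
      + (u (k * B + n * B) - homTraj Q (k * B) (u (k * B)) (n * B)) := by abel
  rw [e]
  refine (spv_add hn _ _).trans ?_
  exact add_le_add (hom_contract hn T B hconn q hq0 Q h0 h1 hQ k _) (herr _)

/-- Scalar comparison lemma. -/
lemma scalar_decay (L : ℕ) (hL : 0 < L) (δ : ℝ) (hδ0 : 0 < δ) (hδ1 : δ ≤ 1)
    (a : ℝ) (ha : a = 1 - δ / (2 * L)) (S D : ℕ → ℝ) (hS : ∀ k, 0 ≤ S k)
    (h1 : ∀ k, S (k + 1) ≤ S k + D k)
    (h2 : ∀ j, S (j * L + L) ≤ (1 - δ) * S (j * L) + ∑ r ∈ Finset.range L, D (j * L + r))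
    (K : ℕ) (G : ℝ) (hG : 0 ≤ G) (hD : ∀ k, k < K → D k ≤ a ^ k * G) :
    ∀ k, k ≤ K → S k ≤ a ^ k * (2 * (1 + 2 * L / δ + L) * (S 0 + G)) := by
  have hL1 : (1 : ℝ) ≤ L := by exact_mod_cast hL
  have hx : δ / (2 * L) ≤ 1 / 2 := by
    rw [div_le_div_iff₀ (by positivity) (by norm_num)]; nlinarith
  have hx0 : 0 < δ / (2 * L) := by positivity
  have ha0 : 0 < a := by rw [ha]; linarith
  have ha1 : a ≤ 1 := by rw [ha]; linarith
  have haL : 1 - δ / 2 ≤ a ^ L := by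
    have := one_add_mul_le_pow (a := -(δ / (2 * L))) (by linarith) L
    have e : 1 + (L : ℝ) * -(δ / (2 * L)) = 1 - δ / 2 := by field_simp; ring
    rw [e] at this
    rw [ha, sub_eq_add_neg]; exact this
  set H := S 0 + 2 * L / δ * G with hH
  have hH0 : 0 ≤ H := by have := hS 0; positivity
  have hsum : ∀ t r, t + r ≤ K → ∑ i ∈ Finset.range r, D (t + i) ≤ a ^ t * (r * G) := by
    intro t r htr
    calc ∑ i ∈ Finset.range r, D (t + i) ≤ ∑ i ∈ Finset.range r, a ^ t * G := by
          apply Finset.sum_le_sum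
          intro i hi
          rw [Finset.mem_range] at hi
          refine (hD (t + i) (by omega)).trans ?_
          apply mul_le_mul_of_nonneg_right _ hG
          exact pow_le_pow_of_le_one ha0.le ha1 (by omega)
      _ = _ := by simp; ring
  have hal : ∀ j, j * L ≤ K → S (j * L) ≤ a ^ (j * L) * H := by
    intro j
    induction j with
    | zero =>
      intro _
      simp only [zero_mul, pow_zero, one_mul, hH]
      have : 0 ≤ 2 * L / δ * G := by positivity
      linarith
    | succ j ih =>
      intro hjK
      have e : (j + 1) * L = j * L + L := by ring
      rw [e] at hjK ⊢
      have i1 := ih (by omega)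
      have i2 := hsum (j * L) L hjK
      have i3 := h2 j
      have e3 : (L : ℝ) * G ≤ δ / 2 * H := by
        have : δ / 2 * H = δ / 2 * S 0 + L * G := by rw [hH]; field_simp
        rw [this]
        have := mul_nonneg (by linarith : 0 ≤ δ / 2) (hS 0)
        linarith
      have hap : 0 ≤ a ^ (j * L) := by positivity
      calc S (j * L + L) ≤ (1 - δ) * (a ^ (j * L) * H) + a ^ (j * L) * (L * G) := by
            have := mul_le_mul_of_nonneg_left i1 (by linarith : 0 ≤ 1 - δ)
            linarith
        _ = a ^ (j * L) * ((1 - δ) * H + L * G) := by ring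
        _ ≤ a ^ (j * L) * (a ^ L * H) := by
            apply mul_le_mul_of_nonneg_left _ hap
            nlinarith
        _ = _ := by rw [pow_add]; ring
  have hnon : ∀ t r, S (t + r) ≤ S t + ∑ i ∈ Finset.range r, D (t + i) := by
    intro t r
    induction r with
    | zero => simp
    | succ r ih =>
      rw [Finset.sum_range_succ, ← add_assoc]
      have := h1 (t + r)
      linarith
  intro k hk
  obtain ⟨j, r, hr, rfl⟩ : ∃ j r, r < L ∧ k = j * L + r :=
    ⟨k / L, k % L, Nat.mod_lt _ hL, by rw [mul_comm]; exact (Nat.div_add_mod k L).symm⟩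
  have i1 := hal j (by omega)
  have i2 := hsum (j * L) r hk
  have i3 := hnon (j * L) r
  have hap : 0 ≤ a ^ (j * L) := by positivity
  have hr' : (r : ℝ) ≤ L := by exact_mod_cast hr.le
  have har : 1 / 2 ≤ a ^ r := by
    have : a ^ L ≤ a ^ r := pow_le_pow_of_le_one ha0.le ha1 hr.le
    linarith
  have hM : H + r * G ≤ (1 + 2 * L / δ + L) * (S 0 + G) := by
    rw [hH]
    have t1 : (r : ℝ) * G ≤ L * G := by gcongr
    have t2 : 0 ≤ 2 * L / δ * S 0 := mul_nonneg (by positivity) (hS 0)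
    have t3 : 0 ≤ L * S 0 := mul_nonneg (by positivity) (hS 0)
    linarith
  have hM0 : 0 ≤ (1 + 2 * L / δ + L) * (S 0 + G) :=
    le_trans (by positivity) hM
  calc S (j * L + r) ≤ a ^ (j * L) * (H + r * G) := by linarith
    _ ≤ a ^ (j * L) * ((1 + 2 * L / δ + L) * (S 0 + G)) := by gcongr
    _ ≤ a ^ (j * L) * ((a ^ r * 2) * ((1 + 2 * L / δ + L) * (S 0 + G))) := by
        apply mul_le_mul_of_nonneg_left _ hap
        nlinarith
    _ = _ := by rw [pow_add]; ring

/-- Perturbed consensus estimate. -/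
lemma consensus_decay {n : ℕ} (hn : 0 < n) (T : ℕ → Fin n → Fin n → Prop) (B : ℕ) (hB : 0 < B)
    (hconn : ∀ k : ℕ, ∀ i j : Fin n,
      Relation.ReflTransGen (fun u w => ∃ l, k * B ≤ l ∧ l < (k + 1) * B ∧ T l u w) i j)
    (q : ℝ) (hq0 : 0 < q) (hq1 : q ≤ 1) (Q : ℕ → Matrix (Fin n) (Fin n) ℝ)
    (h0 : ∀ k i j, 0 ≤ Q k i j) (h1 : ∀ k i, ∑ j, Q k i j = 1)
    (hQ : ∀ k i j, (T k j i ∨ j = i) → q ≤ Q k i j)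
    (a : ℝ) (ha : a = 1 - q ^ (n * B) / (2 * ((n * B : ℕ) : ℝ)))
    (u d : ℕ → Fin n → ℝ) (hu : ∀ k, u (k + 1) = Q k *ᵥ u k + d k)
    (K : ℕ) (G : ℝ) (hG : 0 ≤ G) (hD : ∀ k, k < K → spv (d k) ≤ a ^ k * G) :
    ∀ k, k ≤ K → spv (u k) ≤ a ^ k *
      (2 * (1 + 2 * ((n * B : ℕ) : ℝ) / q ^ (n * B) + ((n * B : ℕ) : ℝ)) * (spv (u 0) + G)) := by
  apply scalar_decay (n * B) (Nat.mul_pos hn hB) (q ^ (n * B)) (by positivity)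
    (pow_le_one₀ hq0.le hq1) a ha (fun k => spv (u k)) (fun k => spv (d k))
    (fun k => spv_nonneg hn _) _ _ K G hG hD
  · intro k
    rw [hu]
    exact (spv_add hn _ _).trans (add_le_add_left (spv_mulVec hn (h0 k) (h1 k) _) _)
  · intro j
    have := pert_contract hn T B hconn q hq0 Q h0 h1 hQ u d hu (j * n)
    rw [mul_assoc] at this
    exact this

lemma eunorm_le_sum {d : ℕ} (x : Fin d → ℝ) : eunorm x ≤ ∑ i, |x i| := by
  unfold eunorm
  apply Real.sqrt_le_iff.2
  refine ⟨Finset.sum_nonneg fun i _ => abs_nonneg _, ?_⟩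
  have := Finset.sum_sq_le_sq_sum_of_nonneg (s := Finset.univ) (f := fun i => |x i|)
    (fun i _ => abs_nonneg _)
  simpa using this

lemma abs_le_eunorm {d : ℕ} (x : Fin d → ℝ) (i : Fin d) : |x i| ≤ eunorm x := by
  unfold eunorm
  apply Real.abs_le_sqrt
  exact Finset.single_le_sum (f := fun i => x i ^ 2) (fun i _ => sq_nonneg _) (Finset.mem_univ i)

lemma le_wnormSeq {d : ℕ} {a : ℝ} (ha : 0 < a) (x : ℕ → Fin d → ℝ) {K k : ℕ} (hk : k ≤ K) :
    eunorm (x k) ≤ a ^ k * wnormSeq a x K := by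
  have : eunorm (x k) / a ^ k ≤ wnormSeq a x K :=
    Finset.le_sup' (fun k => eunorm (x k) / a ^ k) (Finset.mem_range.2 (by omega))
  rwa [div_le_iff₀ (by positivity), mul_comm] at this

lemma wnormSeq_le {d : ℕ} {a : ℝ} (ha : 0 < a) (x : ℕ → Fin d → ℝ) {K : ℕ} {c : ℝ}
    (h : ∀ k, k ≤ K → eunorm (x k) ≤ a ^ k * c) : wnormSeq a x K ≤ c := by
  apply Finset.sup'_le
  intro k hk
  rw [Finset.mem_range] at hk
  rw [div_le_iff₀ (by positivity), mul_comm]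
  exact h k (by omega)

/-- Uniform bounds on the push-sum weights. -/
lemma weight_bounds {n : ℕ} (hn : 0 < n) (T : ℕ → Fin n → Fin n → Prop) (B : ℕ) (hB : 0 < B)
    (hconn : ∀ k : ℕ, ∀ i j : Fin n,
      Relation.ReflTransGen (fun u w => ∃ l, k * B ≤ l ∧ l < (k + 1) * B ∧ T l u w) i j)
    (P : ℕ → Matrix (Fin n) (Fin n) ℝ)
    (h0 : ∀ k i j, 0 ≤ P k i j) (hcol : ∀ k j, ∑ i, P k i j = 1)
    (c : ℝ) (hc0 : 0 < c) (hc1 : c ≤ 1)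
    (hP : ∀ k i j, (T k j i ∨ j = i) → c ≤ P k i j)
    (v : ℕ → Fin n → ℝ) (hv0 : ∀ i, v 0 i = 1) (hv : ∀ k, v (k + 1) = P k *ᵥ v k) :
    (∀ k, ∑ i, v k i = n) ∧ (∀ k i, v k i ≤ n) ∧ ∀ k i, c ^ (2 * (n * B)) ≤ v k i := by
  have hnn : ∀ k i, 0 ≤ v k i := by
    intro k
    induction k with
    | zero => intro i; rw [hv0]; norm_num
    | succ k ih =>
      intro i
      rw [hv]
      show 0 ≤ ∑ j, P k i j * v k j
      exact Finset.sum_nonneg fun j _ => mul_nonneg (h0 _ _ _) (ih j)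
  have hsum : ∀ k, ∑ i, v k i = n := by
    intro k
    induction k with
    | zero => simp [hv0]
    | succ k ih =>
      rw [hv]
      simp only [Matrix.mulVec, dotProduct]
      rw [Finset.sum_comm]
      simp only [← Finset.sum_mul, hcol, one_mul, ih]
  have hstep : ∀ k i j, (T k j i ∨ j = i) → c * v k j ≤ v (k + 1) i := by
    intro k i j hT
    rw [hv]
    calc c * v k j ≤ P k i j * v k j := mul_le_mul_of_nonneg_right (hP _ _ _ hT) (hnn _ _)
      _ ≤ _ := Finset.single_le_sum (f := fun j => P k i j * v k j)
          (fun l _ => mul_nonneg (h0 _ _ _) (hnn _ _)) (Finset.mem_univ j)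
  have hL : 0 < n * B := Nat.mul_pos hn hB
  refine ⟨hsum, ?_, ?_⟩
  · intro k i
    rw [← hsum k]
    exact Finset.single_le_sum (fun j _ => hnn k j) (Finset.mem_univ i)
  · have hal : ∀ j i, c ^ (n * B) ≤ v (j * (n * B)) i := by
      intro j i
      cases j with
      | zero => simp only [zero_mul, hv0]; exact pow_le_one₀ hc0.le hc1
      | succ j =>
        obtain ⟨b, hb⟩ : ∃ b, 1 ≤ v (j * (n * B)) b := by
          by_contra hcon
          push Not at hcon
          have h1 := hsum (j * (n * B))
          have h2 : ∑ i, v (j * (n * B)) i < ∑ _i : Fin n, (1 : ℝ) :=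
            Finset.sum_lt_sum_of_nonempty ⟨⟨0, hn⟩, Finset.mem_univ _⟩ fun i _ => hcon i
          simp at h2
          linarith
        have := spread T B hconn c hc0 (j * n) (fun r => v (j * n * B + r))
          (fun r i j' hT => hstep _ _ _ hT) i b
        simp only [add_zero] at this
        have e : (j + 1) * (n * B) = j * n * B + n * B := by ring
        rw [e]
        rw [← mul_assoc] at hb
        refine le_trans ?_ this
        exact le_mul_of_one_le_right (by positivity) hb
    have hpow : ∀ r s i, c ^ s * v r i ≤ v (r + s) i := by
      intro r s i
      induction s with
      | zero => simp
      | succ s ih =>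
        have := hstep (r + s) i i (Or.inr rfl)
        calc c ^ (s + 1) * v r i = c * (c ^ s * v r i) := by ring
          _ ≤ c * v (r + s) i := mul_le_mul_of_nonneg_left ih hc0.le
          _ ≤ _ := this
    intro k i
    obtain ⟨j, r, hr, rfl⟩ : ∃ j r, r < n * B ∧ k = j * (n * B) + r :=
      ⟨k / (n * B), k % (n * B), Nat.mod_lt _ hL, by
        rw [mul_comm]; exact (Nat.div_add_mod k (n * B)).symm⟩
    calc c ^ (2 * (n * B)) = c ^ (n * B) * c ^ (n * B) := by rw [two_mul, pow_add]
      _ ≤ c ^ r * v (j * (n * B)) i := by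
          apply mul_le_mul (pow_le_pow_of_le_one hc0.le hc1 hr.le) (hal j i) (by positivity)
            (by positivity)
      _ ≤ _ := hpow _ _ _


lemma spv_neg_smul {n : ℕ} (hn : 0 < n) {s : ℝ} (hs : 0 ≤ s) (u : Fin n → ℝ) :
    spv ((-s) • u) ≤ s * spv u := by
  apply spv_le hn
  intro i j
  have := mul_le_mul_of_nonneg_left (le_spv u j i) hs
  simp only [Pi.smul_apply, smul_eq_mul]
  linarith

/-- Proposition 5: the disturbance system over time-varying directed graphs
is finite-gain stable.  `T k j i` means that node `j` transmits to node `i`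
during time interval `k`, and `D k j` is the instantaneous out-degree of node
`j` (including itself). -/
theorem stmt11 {n : ℕ} (hn : 0 < n) (m : ℝ) (hm : 0 < m)
    (f : Fin n → ℝ → ℝ) (pl pu ℓ : Fin n → ℝ) (hbox : ∀ i, pl i ≤ pu i)
    (hf : ∀ i, ContDiff ℝ 2 (f i))
    (hsc : ∀ i, ∀ x ∈ Set.Icc (pl i) (pu i), m ≤ iteratedDeriv 2 (f i) x)
    (nhat : ℝ) (hnhat : 0 < nhat) (ξ : ℝ) (hξ : ξ ∈ Set.Ioc (0 : ℝ) ((n : ℝ) / nhat))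
    -- the time-varying directed communication graph and the column-stochastic matrices
    (T : ℕ → Fin n → Fin n → Prop) (hTirrefl : ∀ k j, ¬ T k j j)
    (D : ℕ → Fin n → ℕ)
    (hDdef : ∀ k j, D k j = Nat.card {i : Fin n // T k j i} + 1)
    (hDle : ∀ k j, D k j ≤ n)
    (P : ℕ → Matrix (Fin n) (Fin n) ℝ)
    (hPdef : ∀ k i j, (T k j i ∨ j = i → P k i j = 1 / (D k j : ℝ)) ∧
        (¬ (T k j i ∨ j = i) → P k i j = 0))
    (hPcol : ∀ k j, ∑ i, P k i j = 1)
    -- B-window strong connectivity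
    (B : ℕ) (hB : 0 < B)
    (hconn : ∀ k : ℕ, ∀ i j : Fin n,
      Relation.ReflTransGen (fun u w => ∃ l, k * B ≤ l ∧ l < (k + 1) * B ∧ T l u w) i j)
    -- the equilibrium of the nominal system
    (pstar : Fin n → ℝ) (lamstar : ℝ)
    (heq : ∀ s : ℝ, 0 < s → ∀ i,
      pstar i = projI (pl i) (pu i)
        (pstar i - s * deriv (f i) (pstar i) + s * ξ * (nhat / (n : ℝ)) * lamstar))
    (hbal : ∑ i, (pstar i - ℓ i) = 0) :
    ∃ a ∈ Set.Ioo (0 : ℝ) 1, ∃ sbar > (0 : ℝ), ∃ α2 > (0 : ℝ),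
      ∀ s ∈ Set.Ioo (0 : ℝ) sbar,
        ∀ p lam v x y : ℕ → Fin n → ℝ,
          (∀ i, v 0 i = 1) →
          (∀ i, y 0 i = nhat * (p 0 i - ℓ i)) →
          (∀ (k : ℕ) (i : Fin n), p (k + 1) i = projI (pl i) (pu i)
              (p k i - s * deriv (f i) (p k i) + s * ξ * x k i)) →
          (∀ k : ℕ, lam (k + 1) = P k *ᵥ (lam k - s • y k)) →
          (∀ k : ℕ, v (k + 1) = P k *ᵥ v k) →
          (∀ (k : ℕ) (i : Fin n), x (k + 1) i = lam (k + 1) i / v (k + 1) i) →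
          (∀ k : ℕ, y (k + 1) = P k *ᵥ y k + nhat • (p (k + 1) - p k)) →
          ∃ β2 ≥ (0 : ℝ), ∀ K : ℕ,
            wnormSeq a (fun k i => x k i - (1 / (n : ℝ)) * ∑ j, lam k j) K ≤
              s * α2 *
                  wnormSeq a
                    (fun k => Fin.snoc (fun i => p k i - pstar i)
                      ((1 / nhat) * (∑ j, lam k j) - lamstar)) K +
                β2 := by
  classical
  have hnR : (0 : ℝ) < n := by exact_mod_cast hn
  have hn1 : (1 : ℝ) ≤ n := by exact_mod_cast hn
  have hL : 0 < n * B := Nat.mul_pos hn hB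
  obtain ⟨c, hc⟩ : ∃ c : ℝ, c = 1 / n := ⟨_, rfl⟩
  have hc0 : 0 < c := by rw [hc]; positivity
  have hc1 : c ≤ 1 := by rw [hc, div_le_one hnR]; exact hn1
  have hPc : ∀ k i j, (T k j i ∨ j = i) → c ≤ P k i j := by
    intro k i j h
    rw [(hPdef k i j).1 h, hc]
    have h1 : (0 : ℝ) < D k j := by
      have := hDdef k j
      exact_mod_cast (by omega : 0 < D k j)
    have h2 : (D k j : ℝ) ≤ n := by exact_mod_cast hDle k j
    exact one_div_le_one_div_of_le h1 h2
  have hP0 : ∀ k i j, 0 ≤ P k i j := by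
    intro k i j
    by_cases h : T k j i ∨ j = i
    · exact hc0.le.trans (hPc k i j h)
    · exact ((hPdef k i j).2 h).ge
  obtain ⟨η, hη⟩ : ∃ η : ℝ, η = c ^ (2 * (n * B)) := ⟨_, rfl⟩
  have hη0 : 0 < η := by rw [hη]; positivity
  have hη1 : η ≤ 1 := by rw [hη]; exact pow_le_one₀ hc0.le hc1
  obtain ⟨q, hq⟩ : ∃ q : ℝ, q = c * η / n := ⟨_, rfl⟩
  have hq0 : 0 < q := by rw [hq]; positivity
  have hq1 : q ≤ 1 := by
    rw [hq, div_le_one hnR]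
    have := mul_le_one₀ hc1 hη0.le hη1
    linarith
  obtain ⟨a, ha⟩ : ∃ a : ℝ, a = 1 - q ^ (n * B) / (2 * ((n * B : ℕ) : ℝ)) := ⟨_, rfl⟩
  obtain ⟨C, hC⟩ : ∃ C : ℝ, C = 2 * (1 + 2 * ((n * B : ℕ) : ℝ) / q ^ (n * B) + ((n * B : ℕ) : ℝ)) :=
    ⟨_, rfl⟩
  have hC0 : 0 < C := by rw [hC]; positivity
  have hLR : (1 : ℝ) ≤ ((n * B : ℕ) : ℝ) := by exact_mod_cast hL
  have hqp : 0 < q ^ (n * B) := by positivity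
  have hqp1 : q ^ (n * B) ≤ 1 := pow_le_one₀ hq0.le hq1
  have ha0 : 0 < a := by
    have : q ^ (n * B) / (2 * ((n * B : ℕ) : ℝ)) < 1 := by
      rw [div_lt_one (by positivity)]; linarith
    rw [ha]; linarith
  have ha1 : a < 1 := by
    have : 0 < q ^ (n * B) / (2 * ((n * B : ℕ) : ℝ)) := by positivity
    rw [ha]; linarith
  refine ⟨a, ⟨ha0, ha1⟩, 1, one_pos, n * (C * (C * (4 * nhat / η))), by positivity, ?_⟩
  intro s hs p lam v x y hv0 hy0 hp hlam hv hx hy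
  have hs0 : 0 ≤ s := hs.1.le
  obtain ⟨hvsum, hvn, hvη⟩ := weight_bounds hn T B hB hconn P hP0 hPcol c hc0 hc1 hPc v hv0 hv
  rw [← hη] at hvη
  have hvpos : ∀ k i, 0 < v k i := fun k i => lt_of_lt_of_le hη0 (hvη k i)
  let Q : ℕ → Matrix (Fin n) (Fin n) ℝ := fun k => Matrix.of fun i j => P k i j * v k j / v (k + 1) i
  have hQe : ∀ k i j, Q k i j = P k i j * v k j / v (k + 1) i := fun k i j => rfl
  have hQ0 : ∀ k i j, 0 ≤ Q k i j := fun k i j =>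
    div_nonneg (mul_nonneg (hP0 _ _ _) (hvpos _ _).le) (hvpos _ _).le
  have hQ1 : ∀ k i, ∑ j, Q k i j = 1 := by
    intro k i
    simp only [hQe]
    rw [← Finset.sum_div]
    have : ∑ j, P k i j * v k j = v (k + 1) i := by rw [hv]; rfl
    rw [this, div_self (hvpos _ _).ne']
  have hQq : ∀ k i j, (T k j i ∨ j = i) → q ≤ Q k i j := by
    intro k i j h
    rw [hQe, hq]
    apply div_le_div₀ (mul_nonneg (hP0 _ _ _) (hvpos _ _).le) _ (hvpos _ _) (hvn _ _)
    exact mul_le_mul (hPc _ _ _ h) (hvη _ _) hη0.le (hP0 _ _ _)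
  have hQv : ∀ k (w : Fin n → ℝ),
      Q k *ᵥ (fun j => w j / v k j) = fun i => (P k *ᵥ w) i / v (k + 1) i := by
    intro k w
    funext i
    simp only [Matrix.mulVec, dotProduct, hQe]
    rw [Finset.sum_div]
    apply Finset.sum_congr rfl
    intro j _
    have h1 := (hvpos k j).ne'
    have h2 := (hvpos (k + 1) i).ne'
    field_simp
  let u : ℕ → Fin n → ℝ := fun k i => lam k i / v k i
  let h : ℕ → Fin n → ℝ := fun k i => y k i / v k i
  let dh : ℕ → Fin n → ℝ := fun k i => nhat * (p (k + 1) i - p k i) / v (k + 1) i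
  have hhrec : ∀ k, h (k + 1) = Q k *ᵥ h k + dh k := by
    intro k
    have := hQv k (y k)
    change Q k *ᵥ h k = _ at this
    rw [this]
    funext i
    simp only [h, dh, hy, Pi.add_apply, Pi.smul_apply, Pi.sub_apply, smul_eq_mul, add_div]
  have hurec : ∀ k, u (k + 1) = Q k *ᵥ u k + Q k *ᵥ ((-s) • h k) := by
    intro k
    have h1 := hQv k (lam k)
    have h2 := hQv k (y k)
    change Q k *ᵥ h k = _ at h2
    change Q k *ᵥ u k = _ at h1
    rw [Matrix.mulVec_smul, h1, h2]
    funext i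
    simp only [u, hlam, Matrix.mulVec_sub, Matrix.mulVec_smul, Pi.add_apply, Pi.smul_apply,
      Pi.sub_apply, smul_eq_mul]
    ring
  -- consensus error versus spread
  have herr : ∀ k i, |u k i - (1 / (n : ℝ)) * ∑ j, lam k j| ≤ spv (u k) := by
    intro k i
    have e1 : ∑ j, lam k j = ∑ j, v k j * u k j := by
      apply Finset.sum_congr rfl
      intro j _
      have := (hvpos k j).ne'
      simp only [u]
      field_simp
    have e2 : u k i - (1 / (n : ℝ)) * ∑ j, lam k j
        = (1 / (n : ℝ)) * ∑ j, v k j * (u k i - u k j) := by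
      simp only [mul_sub, Finset.sum_sub_distrib, ← Finset.sum_mul, hvsum, e1]
      field_simp
    rw [e2, abs_mul, abs_of_pos (by positivity : (0 : ℝ) < 1 / n)]
    have e3 : |∑ j, v k j * (u k i - u k j)| ≤ n * spv (u k) := by
      refine (Finset.abs_sum_le_sum_abs _ _).trans ?_
      rw [← hvsum k, Finset.sum_mul]
      apply Finset.sum_le_sum
      intro j _
      rw [abs_mul, abs_of_pos (hvpos k j)]
      apply mul_le_mul_of_nonneg_left _ (hvpos k j).le
      rw [abs_le]
      have t1 := le_spv (u k) i j
      have t2 := le_spv (u k) j i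
      constructor <;> linarith
    calc (1 / (n : ℝ)) * |∑ j, v k j * (u k i - u k j)| ≤ (1 / (n : ℝ)) * (n * spv (u k)) := by
          gcongr
      _ = spv (u k) := by field_simp
  let E0 : ℝ := eunorm (fun i => x 0 i - (1 / (n : ℝ)) * ∑ j, lam 0 j)
  have hE0 : 0 ≤ E0 := Real.sqrt_nonneg _
  have hsu := spv_nonneg hn (u 0)
  have hsh := spv_nonneg hn (h 0)
  refine ⟨E0 + n * (C * (spv (u 0) + s * (C * spv (h 0)))), by positivity, ?_⟩
  intro K
  obtain ⟨z, hz⟩ : ∃ z : ℕ → Fin (n + 1) → ℝ, z = fun k => Fin.snoc (fun i => p k i - pstar i)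
      ((1 / nhat) * (∑ j, lam k j) - lamstar) := ⟨_, rfl⟩
  rw [← hz]
  obtain ⟨Z, hZ⟩ : ∃ Z : ℝ, Z = wnormSeq a z K := ⟨_, rfl⟩
  have hZ0 : 0 ≤ Z := by
    have h1 := le_wnormSeq ha0 z (Nat.zero_le K)
    have h2 : 0 ≤ eunorm (z 0) := Real.sqrt_nonneg _
    rw [pow_zero, one_mul, ← hZ] at h1
    linarith
  have hpz : ∀ k, k ≤ K → ∀ i, |p k i - pstar i| ≤ a ^ k * Z := by
    intro k hk i
    have h1 := le_wnormSeq ha0 z hk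
    have h2 := abs_le_eunorm (z k) i.castSucc
    have h3 : z k i.castSucc = p k i - pstar i := by
      rw [hz]
      exact Fin.snoc_castSucc (α := fun _ => ℝ) _ _ i
    rw [h3] at h2
    rw [← hZ] at h1
    exact h2.trans h1
  rw [← hZ]
  have hdh : ∀ k, k < K → spv (dh k) ≤ a ^ k * (4 * nhat / η * Z) := by
    intro k hk
    have hak : 0 < a ^ k := by positivity
    have habs : ∀ i, |dh k i| ≤ a ^ k * (2 * nhat / η * Z) := by
      intro i
      have h1 := hpz k hk.le i
      have h2 := hpz (k + 1) hk i
      have h3 : a ^ (k + 1) * Z ≤ a ^ k * Z := by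
        apply mul_le_mul_of_nonneg_right _ hZ0
        exact pow_le_pow_of_le_one ha0.le ha1.le (by omega)
      have h4 : |p (k + 1) i - p k i| ≤ 2 * (a ^ k * Z) := by
        rw [abs_le] at h1 h2 ⊢
        constructor <;> linarith [h1.1, h1.2, h2.1, h2.2]
      simp only [dh]
      rw [abs_div, abs_mul, abs_of_pos hnhat, abs_of_pos (hvpos _ _)]
      calc nhat * |p (k + 1) i - p k i| / v (k + 1) i
          ≤ nhat * (2 * (a ^ k * Z)) / η := by
            apply div_le_div₀ (by positivity) _ hη0 (hvη _ _)
            exact mul_le_mul_of_nonneg_left h4 hnhat.le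
        _ = _ := by ring
    apply spv_le hn
    intro i j
    have h1 := abs_le.1 (habs i)
    have h2 := abs_le.1 (habs j)
    have e : a ^ k * (4 * nhat / η * Z) = 2 * (a ^ k * (2 * nhat / η * Z)) := by ring
    rw [e]
    linarith [h1.2, h2.1]
  have hG : 0 ≤ 4 * nhat / η * Z := by positivity
  have bh := consensus_decay hn T B hB hconn q hq0 hq1 Q hQ0 hQ1 hQq a ha h dh hhrec K _ hG hdh
  rw [← hC] at bh
  have hdu : ∀ k, k < K → spv (Q k *ᵥ ((-s) • h k))
      ≤ a ^ k * (s * (C * (spv (h 0) + 4 * nhat / η * Z))) := by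
    intro k hk
    refine (spv_mulVec hn (hQ0 k) (hQ1 k) _).trans ((spv_neg_smul hn hs0 _).trans ?_)
    have := mul_le_mul_of_nonneg_left (bh k hk.le) hs0
    linarith
  have bu := consensus_decay hn T B hB hconn q hq0 hq1 Q hQ0 hQ1 hQq a ha u
    (fun k => Q k *ᵥ ((-s) • h k)) hurec K _ (by positivity) hdu
  rw [← hC] at bu
  apply wnormSeq_le ha0
  intro k hk
  cases k with
  | zero =>
    rw [pow_zero, one_mul]
    change E0 ≤ _
    have t1 : 0 ≤ s * (n * (C * (C * (4 * nhat / η)))) * Z := by positivity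
    have t2 : 0 ≤ n * (C * (spv (u 0) + s * (C * spv (h 0)))) := by positivity
    linarith
  | succ k =>
    have hak : 0 < a ^ (k + 1) := by positivity
    refine (eunorm_le_sum _).trans ?_
    have hux : ∀ i, x (k + 1) i = u (k + 1) i := fun i => hx k i
    calc ∑ i, |x (k + 1) i - (1 / (n : ℝ)) * ∑ j, lam (k + 1) j|
        ≤ ∑ _i : Fin n, spv (u (k + 1)) := by
          apply Finset.sum_le_sum
          intro i _
          rw [hux]
          exact herr (k + 1) i
      _ = n * spv (u (k + 1)) := by simp
      _ ≤ n * (a ^ (k + 1) * (C * (spv (u 0) + s * (C * (spv (h 0) + 4 * nhat / η * Z))))) :=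
          mul_le_mul_of_nonneg_left (bu (k + 1) hk) hnR.le
      _ = a ^ (k + 1) * (s * (n * (C * (C * (4 * nhat / η)))) * Z
            + n * (C * (spv (u 0) + s * (C * spv (h 0))))) := by ring
      _ ≤ _ := by
          apply mul_le_mul_of_nonneg_left _ hak.le
          linarith
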